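/- arXiv:1906.09762 — 2 statements merged into one kernel-verified Lean document; each statement's English description precedes it below -/
import Mathlib

section
/- Fix β > 0, B > 0, N₀ > 0, L > 0 and x > 0, and set a = β·N₀/(x·B). Then ∫₀^∞ (1/L)·exp(−h/L)·max(x·B/β − N₀/h, 0) dh = (x·B/β)·exp(−a/L) − (N₀/L)·E₁(a/L). -/
/-!
The positive part `max (x * B / β - N₀ / h) 0` vanishes exactly for `h ≤ a`, so the integral is one
over `(a, ∞)` of the density times `x * B / β - N₀ / h`. The substitution `t = h / L` turns it into
the integral of `(x * B / β) * exp (-t) - (N₀ / L) * (exp (-t) / t)` over `(a / L, ∞)`. Both terms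
are integrable because `a / L > 0`, so the integral splits; the first term is elementary and the
second is `E1`.
-/

open MeasureTheory

noncomputable def E1 (y : ℝ) : ℝ := ∫ t in Set.Ioi y, Real.exp (-t) / t

lemma integrableOn_exp_neg_div {y : ℝ} (hy : 0 < y) :
    IntegrableOn (fun t : ℝ => Real.exp (-t) / t) (Set.Ioi y) := by
  have hexp : IntegrableOn (fun t : ℝ => Real.exp (-t)) (Set.Ioi y) := by
    simpa using integrableOn_exp_mul_Ioi (a := -1) (by norm_num) y
  refine Integrable.mono' (hexp.mul_const y⁻¹)
    (Measurable.aestronglyMeasurable (by fun_prop)) ?_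
  filter_upwards [ae_restrict_mem measurableSet_Ioi] with t ht
  have hyt : y < t := ht
  have ht0 : 0 < t := hy.trans hyt
  rw [Real.norm_of_nonneg (by positivity), div_eq_mul_inv]
  gcongr

theorem stmt_3 (β B N₀ L x a : ℝ) (hβ : 0 < β) (hB : 0 < B) (hN : 0 < N₀) (hL : 0 < L)
    (hx : 0 < x) (ha : a = β * N₀ / (x * B)) :
    ∫ h in Set.Ioi (0 : ℝ), (1 / L) * Real.exp (-(h / L)) * max (x * B / β - N₀ / h) 0
      = (x * B / β) * Real.exp (-(a / L)) - (N₀ / L) * E1 (a / L) := by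
  have ha0 : 0 < a := by rw [ha]; positivity
  have hc0 : 0 < x * B / β := by positivity
  have hca : N₀ = x * B / β * a := by rw [ha]; field_simp
  generalize x * B / β = c at hca hc0 ⊢
  have hexp : IntegrableOn (fun t : ℝ => Real.exp (-t)) (Set.Ioi (a / L)) := by
    simpa using integrableOn_exp_mul_Ioi (a := -1) (by norm_num) (a / L)
  have hcut : ∫ h in Set.Ioi (0 : ℝ), (1 / L) * Real.exp (-(h / L)) * max (c - N₀ / h) 0
      = ∫ h in Set.Ioi a, (1 / L) * Real.exp (-(h / L)) * max (c - N₀ / h) 0 := by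
    refine setIntegral_eq_of_subset_of_forall_sdiff_eq_zero measurableSet_Ioi
      (Set.Ioi_subset_Ioi ha0.le) ?_
    rintro h ⟨h0, hle⟩
    have h0 : 0 < h := h0
    have hle : h ≤ a := not_lt.mp hle
    have : c ≤ N₀ / h := by
      rw [le_div_iff₀ h0, hca]
      gcongr
    rw [max_eq_right (by linarith), mul_zero]
  have hscale : ∫ h in Set.Ioi a, (1 / L) * Real.exp (-(h / L)) * max (c - N₀ / h) 0
      = ∫ h in Set.Ioi a, L⁻¹ * (fun t : ℝ => c * Real.exp (-t)
          - N₀ / L * (Real.exp (-t) / t)) (L⁻¹ * h) := by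
    refine setIntegral_congr_fun measurableSet_Ioi fun h hh => ?_
    have hh : a < h := hh
    have h0 : 0 < h := ha0.trans hh
    have : N₀ / h ≤ c := by
      rw [div_le_iff₀ h0, hca]
      gcongr
    simp only
    rw [max_eq_left (by linarith), show L⁻¹ * h = h / L by ring]
    field_simp
  rw [hcut, hscale, integral_const_mul, ← smul_eq_mul,
    integral_comp_mul_left_Ioi' (fun t : ℝ => c * Real.exp (-t) - N₀ / L * (Real.exp (-t) / t)) _
      (inv_pos.mpr hL), show L⁻¹ * a = a / L by ring,
    integral_sub (hexp.const_mul c) ((integrableOn_exp_neg_div (by positivity)).const_mul _),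
    integral_const_mul, integral_const_mul, integral_exp_neg_Ioi, E1]
end

section
/- Fix β > 0, B > 0, N₀ > 0, L > 0, k > 0, c > 0, λ̄ ∈ ℝ, and set c₀ = β·N₀/(B·L). Define G : (0,∞) → ℝ by G(x) = β·((x·B/β)·exp(−c₀/x) − (N₀/L)·E₁(c₀/x)) + (c·β/k²)·(λ̄ − B·E₁(c₀/x))². Then G is differentiable on (0,∞) with G'(x) = B·exp(−c₀/x)·(1 − (2·c·β/(k²·x))·(λ̄ − B·E₁(c₀/x))); in particular G'(x) ≤ 0 at every x > 0 with x ≤ (2·c·β/k²)·(λ̄ − B·E₁(c₀/x)). -/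
/-!
By the fundamental theorem of calculus `E₁'(y) = -e^{-y}/y` for `y > 0`, so the chain rule gives
`d/dx E₁(c₀/x) = e^{-c₀/x}/x`. In `G'` the terms `(B c₀/x) e^{-c₀/x}` and
`(β N₀/(L x)) e^{-c₀/x}` cancel, because `B c₀ = β N₀ / L`; what is left factors as
`B e^{-c₀/x}` times a bracket, and the constraint on `x` says that this bracket is non-positive.
-/

open MeasureTheory

lemma hasDerivAt_E1 {y : ℝ} (hy : 0 < y) : HasDerivAt E1 (-(Real.exp (-y) / y)) y := by
  have hcont : ContinuousAt (fun t : ℝ => Real.exp (-t) / t) y :=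
    ContinuousAt.div (by fun_prop) continuousAt_id hy.ne'
  have hmeas : Measurable fun t : ℝ => Real.exp (-t) / t := by fun_prop
  have hF : HasDerivAt (fun z => ∫ t in y..z, Real.exp (-t) / t) (Real.exp (-y) / y) y :=
    intervalIntegral.integral_hasDerivAt_right (by simp)
      hmeas.stronglyMeasurable.stronglyMeasurableAtFilter hcont
  refine (hF.const_sub (E1 y)).congr_of_eventuallyEq ?_
  filter_upwards [lt_mem_nhds hy] with z hz
  have h := intervalIntegral.integral_Ioi_sub_Ioi' (integrableOn_exp_neg_div hy)
    (integrableOn_exp_neg_div hz)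
  simp only [E1]
  linarith

theorem stmt_17 (β B N₀ L k c lam : ℝ) (hβ : 0 < β) (hB : 0 < B) (hN : 0 < N₀) (hL : 0 < L)
    (hk : 0 < k) (hc : 0 < c)
    (c₀ : ℝ) (hc₀ : c₀ = β * N₀ / (B * L))
    (G : ℝ → ℝ)
    (hG : ∀ x, G x = β * ((x * B / β) * Real.exp (-(c₀ / x)) - (N₀ / L) * E1 (c₀ / x))
        + (c * β / k ^ 2) * (lam - B * E1 (c₀ / x)) ^ 2) :
    ∀ x, 0 < x →
      HasDerivAt G
        (B * Real.exp (-(c₀ / x))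
          * (1 - (2 * c * β / (k ^ 2 * x)) * (lam - B * E1 (c₀ / x)))) x ∧
      (x ≤ (2 * c * β / k ^ 2) * (lam - B * E1 (c₀ / x)) →
        B * Real.exp (-(c₀ / x))
          * (1 - (2 * c * β / (k ^ 2 * x)) * (lam - B * E1 (c₀ / x))) ≤ 0) := by
  intro x hx
  have hc₀pos : 0 < c₀ := by rw [hc₀]; positivity
  have hdiv : HasDerivAt (fun z : ℝ => c₀ / z) (-(c₀ / x ^ 2)) x := by
    have h := (hasDerivAt_inv hx.ne').const_mul c₀
    simp only [← div_eq_mul_inv] at h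
    exact h.congr_deriv (by ring)
  have hE : HasDerivAt (fun z => E1 (c₀ / z)) (Real.exp (-(c₀ / x)) / x) x := by
    have h := (hasDerivAt_E1 (div_pos hc₀pos hx)).comp x hdiv
    refine h.congr_deriv ?_
    field_simp
  constructor
  · have hexp := hdiv.neg.exp
    have hlin : HasDerivAt (fun z : ℝ => z * B / β) (B / β) x := by
      simpa using ((hasDerivAt_id x).mul_const B).div_const β
    have h := (((hlin.mul hexp).sub (hE.const_mul (N₀ / L))).const_mul β).add
      ((((hE.const_mul B).const_sub lam).pow 2).const_mul (c * β / k ^ 2))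
    have hGf : G = _ := funext hG
    rw [hGf]
    refine h.congr_deriv ?_
    -- The two terms without the factor `lam - B * E1 (c₀ / x)` cancel because `B c₀ = β N₀ / L`.
    have hN' : N₀ / L = B * c₀ / β := by rw [hc₀]; field_simp
    rw [hN']
    simp only [Pi.neg_apply]
    field_simp
    ring
  · intro hle
    have h1 : 1 ≤ (2 * c * β / (k ^ 2 * x)) * (lam - B * E1 (c₀ / x)) := by
      have h2 : (2 * c * β / (k ^ 2 * x)) * (lam - B * E1 (c₀ / x))
          = (2 * c * β / k ^ 2) * (lam - B * E1 (c₀ / x)) / x := by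
        field_simp
      rw [h2, le_div_iff₀ hx]
      linarith
    exact mul_nonpos_of_nonneg_of_nonpos (by positivity) (by linarith)
end
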